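/- arXiv:2604.17537 — 4 statements merged into one kernel-verified Lean document; each statement's English description precedes it below -/
import Mathlib

section
/- Let n ≥ 1 and let p : ℝ → Fin n → ℝ be such that each p_i is differentiable at T₀, p_i(T) > 0 near T₀, and ∑_i p_i(T) = 1 near T₀. Define the purification Ψ(T) ∈ EuclideanSpace ℂ (Fin n × Fin n) by Ψ(T)_{(i,j)} = √(p_i(T)) if i = j and 0 otherwise, and the thermal state τ(T) = Matrix.diagonal (p(T)). Then the pure-state QFI of the purification equals the QFI of the thermal state: 4( ‖Ψ'(T₀)‖² − |⟨Ψ'(T₀), Ψ(T₀)⟩|² ) = 2 ∑_{i,j} |(τ'(T₀))_{i j}|² / (p_i(T₀) + p_j(T₀)). -/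
open scoped InnerProductSpace

/-- The pure-state QFI of the purification
`Ψ(T)_{(i,j)} = δ_{ij} √(p_i(T))` equals the QFI of the diagonal thermal state
`τ(T) = diagonal (p T)`:
`4(‖Ψ'(T₀)‖² − |⟨Ψ'(T₀), Ψ(T₀)⟩|²) = 2 ∑_{i,j} |(τ'(T₀))_{ij}|²/(p_i(T₀)+p_j(T₀))`. -/
theorem stmt_4 {n : ℕ} (hn : 1 ≤ n) (p : ℝ → Fin n → ℝ) (T₀ : ℝ)
    (hdiff : ∀ i, DifferentiableAt ℝ (fun T => p T i) T₀)
    (hpos : ∀ᶠ T in nhds T₀, ∀ i, 0 < p T i)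
    (hsum : ∀ᶠ T in nhds T₀, ∑ i, p T i = 1)
    (Ψ : ℝ → EuclideanSpace ℂ (Fin n × Fin n))
    (hΨ : ∀ T (i j : Fin n),
      Ψ T (i, j) = if i = j then (Real.sqrt (p T i) : ℂ) else 0)
    (τ : ℝ → Matrix (Fin n) (Fin n) ℂ)
    (hτ : ∀ T, τ T = Matrix.diagonal (fun i => (p T i : ℂ)))
    (τ' : Matrix (Fin n) (Fin n) ℂ)
    (hτ' : ∀ i j, τ' i j = deriv (fun T => τ T i j) T₀) :
    4 * (‖deriv Ψ T₀‖ ^ 2 - ‖⟪deriv Ψ T₀, Ψ T₀⟫_ℂ‖ ^ 2) =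
      2 * ∑ i, ∑ j, ‖τ' i j‖ ^ 2 / (p T₀ i + p T₀ j) := by
  have hp0 : ∀ i, 0 < p T₀ i := hpos.self_of_nhds
  have hd : ∀ i, HasDerivAt (fun T => p T i) (deriv (fun T => p T i) T₀) T₀ :=
    fun i => (hdiff i).hasDerivAt
  generalize hq : (fun i => deriv (fun T => p T i) T₀) = q at *
  have hd' : ∀ i, HasDerivAt (fun T => p T i) (q i) T₀ := by
    intro i; rw [← hq]; exact hd i
  have hq0 : ∑ i, q i = 0 := by
    have h1 : HasDerivAt (fun T => ∑ i, p T i) (∑ i, q i) T₀ :=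
      HasDerivAt.fun_sum (fun i _ => hd' i)
    have h2 : HasDerivAt (fun T => ∑ i, p T i) 0 T₀ :=
      (hasDerivAt_const T₀ (1:ℝ)).congr_of_eventuallyEq hsum
    exact h1.unique h2
  have hτe : ∀ i j, τ' i j = if i = j then (q i : ℂ) else 0 := by
    intro i j
    rw [hτ']
    by_cases h : i = j
    · subst h
      simp only [hτ, Matrix.diagonal_apply_eq, if_true]
      exact (hd' i).ofReal_comp.deriv
    · simp [hτ, h]
  let V : Fin n × Fin n → ℂ := fun x =>
    if x.1 = x.2 then ((q x.1 / (2 * Real.sqrt (p T₀ x.1)) : ℝ) : ℂ) else 0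
  have hΨd : HasDerivAt Ψ (WithLp.toLp 2 V) T₀ := by
    have hg : HasDerivAt (fun T => (fun x => Ψ T x : Fin n × Fin n → ℂ)) V T₀ := by
      rw [hasDerivAt_pi]
      rintro ⟨i, j⟩
      by_cases h : i = j
      · subst h
        have := ((hd' i).sqrt (hp0 i).ne').ofReal_comp
        simpa only [hΨ, if_true, V] using this
      · simp only [hΨ, if_neg h, V]
        exact hasDerivAt_const T₀ (0:ℂ)
    exact (PiLp.hasFDerivAt_toLp (𝕜 := ℝ) 2 _).comp_hasDerivAt T₀ hg
  rw [hΨd.deriv]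
  have hin : ⟪(WithLp.toLp 2 V : EuclideanSpace ℂ (Fin n × Fin n)), Ψ T₀⟫_ℂ = 0 := by
    have : ⟪(WithLp.toLp 2 V : EuclideanSpace ℂ (Fin n × Fin n)), Ψ T₀⟫_ℂ
        = ((∑ i, q i / 2 : ℝ) : ℂ) := by
      rw [PiLp.inner_apply, Fintype.sum_prod_type]
      push_cast
      refine Finset.sum_congr rfl fun i _ => ?_
      rw [Finset.sum_eq_single i]
      · have h := (Real.sqrt_pos.2 (hp0 i)).ne'
        have : Real.sqrt (p T₀ i) * (q i / (2 * Real.sqrt (p T₀ i))) = q i / 2 := by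
          field_simp
        simp only [hΨ, V, if_true, RCLike.inner_apply, Complex.conj_ofReal]
        rw [← Complex.ofReal_mul, this]; push_cast; rfl
      · intro j _ hj
        simp [hΨ, V, hj.symm]
      · simp
    rw [this, ← Finset.sum_div, hq0]; simp
  rw [hin, EuclideanSpace.norm_sq_eq, Fintype.sum_prod_type]
  simp only [norm_zero, ne_eq, OfNat.ofNat_ne_zero, not_false_eq_true, zero_pow, sub_zero]
  rw [Finset.mul_sum, Finset.mul_sum]
  refine Finset.sum_congr rfl fun i _ => ?_
  rw [Finset.sum_eq_single i, Finset.sum_eq_single i]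
  · have h := hp0 i
    simp only [V, hτe, if_true, Complex.norm_real, Real.norm_eq_abs, sq_abs, div_pow, mul_pow,
      Real.sq_sqrt h.le]
    field_simp
    ring
  · intro j _ hj
    simp [hτe, hj.symm]
  · simp
  · intro j _ hj
    simp [V, hj.symm]
  · simp
end

section
/- Let a, b, c ∈ ℝ and let U ∈ Matrix (Fin 2 × Fin 2) (Fin 2 × Fin 2) ℂ be the matrix with entries U_{(0,0),(0,0)} = exp(i a), U_{(0,1),(1,0)} = exp(i b), U_{(1,0),(0,1)} = exp(i b), U_{(1,1),(1,1)} = exp(i c), and all other entries 0. Then: (i) U is unitary, i.e., Uᴴ * U = 1; (ii) U commutes with H = σ_z ⊗ₖ I₂ + I₂ ⊗ₖ σ_z; and (iii) for every ρ ∈ Matrix (Fin 2) (Fin 2) ℂ with Matrix.trace ρ = 1 and every β₀, β₁ ∈ ℝ, the partial trace over the second (environment) factor of U * (ρ ⊗ₖ !![(β₀:ℂ), 0; 0, β₁]) * Uᴴ equals !![(β₀:ℂ), 0; 0, β₁]. -/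
open Kronecker Matrix

/-- The Pauli-z matrix. -/
def pauliZ : Matrix (Fin 2) (Fin 2) ℂ := !![1, 0; 0, -1]

/-- The total Hamiltonian `H = σ_z ⊗ I + I ⊗ σ_z`. -/
def Htot : Matrix (Fin 2 × Fin 2) (Fin 2 × Fin 2) ℂ :=
  pauliZ ⊗ₖ (1 : Matrix (Fin 2) (Fin 2) ℂ) +
    (1 : Matrix (Fin 2) (Fin 2) ℂ) ⊗ₖ pauliZ

/-- The phased-SWAP matrix `U` (with entries `e^{ia}, e^{ib},
e^{ib}, e^{ic}` at positions `((0,0),(0,0)); ((0,1),(1,0)); ((1,0),(0,1));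
((1,1),(1,1))` and `0` elsewhere) is unitary, commutes with
`H = σ_z ⊗ I + I ⊗ σ_z`, and for any trace-one probe state `ρ` and any diagonal
environment state `diag(β₀, β₁)`, the partial trace over the environment of
`U (ρ ⊗ diag(β₀,β₁)) Uᴴ` equals `diag(β₀, β₁)`. -/
theorem stmt_14 (a b c : ℝ) (U : Matrix (Fin 2 × Fin 2) (Fin 2 × Fin 2) ℂ)
    (hU : ∀ x y : Fin 2 × Fin 2, U x y =
      if x = ((0 : Fin 2), (0 : Fin 2)) ∧ y = ((0 : Fin 2), (0 : Fin 2)) then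
        Complex.exp (Complex.I * a)
      else if x = ((0 : Fin 2), (1 : Fin 2)) ∧ y = ((1 : Fin 2), (0 : Fin 2)) then
        Complex.exp (Complex.I * b)
      else if x = ((1 : Fin 2), (0 : Fin 2)) ∧ y = ((0 : Fin 2), (1 : Fin 2)) then
        Complex.exp (Complex.I * b)
      else if x = ((1 : Fin 2), (1 : Fin 2)) ∧ y = ((1 : Fin 2), (1 : Fin 2)) then
        Complex.exp (Complex.I * c)
      else 0) :
    Uᴴ * U = 1 ∧ U * Htot = Htot * U ∧
    ∀ ρ : Matrix (Fin 2) (Fin 2) ℂ, Matrix.trace ρ = 1 → ∀ β₀ β₁ : ℝ,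
      ∀ s t : Fin 2,
        ∑ k, (U * (ρ ⊗ₖ !![(β₀ : ℂ), 0; 0, (β₁ : ℂ)]) * Uᴴ) (s, k) (t, k) =
          !![(β₀ : ℂ), 0; 0, (β₁ : ℂ)] s t := by
  have key : ∀ x : ℝ, (starRingEnd ℂ) (Complex.exp (Complex.I * x)) *
      Complex.exp (Complex.I * x) = 1 := by
    intro x
    rw [← Complex.exp_conj, ← Complex.exp_add]
    simp
  have ha := key a
  have hb := key b
  have hc := key c
  generalize Complex.exp (Complex.I * a) = A at *
  generalize Complex.exp (Complex.I * b) = B at *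
  generalize Complex.exp (Complex.I * c) = C at *
  refine ⟨?_, ?_, ?_⟩
  · ext ⟨i, j⟩ ⟨k, l⟩
    fin_cases i <;> fin_cases j <;> fin_cases k <;> fin_cases l <;>
      simp [Matrix.mul_apply, Fintype.sum_prod_type, hU, ha, hb, hc, Matrix.one_apply]
  · ext ⟨i, j⟩ ⟨k, l⟩
    fin_cases i <;> fin_cases j <;> fin_cases k <;> fin_cases l <;>
      simp [Matrix.mul_apply, Fintype.sum_prod_type, hU, Htot, pauliZ, Matrix.one_apply] <;> ring
  · intro ρ hρ β₀ β₁ s t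
    have hρ' : ρ 0 0 + ρ 1 1 = 1 := by simpa [Matrix.trace, Fin.sum_univ_two] using hρ
    fin_cases s <;> fin_cases t <;>
      simp [Matrix.mul_apply, Fintype.sum_prod_type, hU]
    · linear_combination (ρ 0 0 * β₀) * ha + (ρ 1 1 * β₀) * hb + β₀ * hρ'
    · linear_combination (ρ 0 0 * β₁) * hb + (ρ 1 1 * β₁) * hc + β₁ * hρ'
end

section
/- Let λ₁, λ₂, λ₃, λ₄, λ₅ ∈ ℝ. In EuclideanSpace ℂ (Fin 2 × Fin 2), let e₀₀, e₀₁, e₁₀, e₁₁ denote the standard basis vectors at indices (0,0), (0,1), (1,0), (1,1), and set Φ₁ = sin(λ₅) • e₁₀ + cos(λ₅) • e₀₁ and Φ₂ = cos(λ₅) • e₁₀ − sin(λ₅) • e₀₁. Let U = exp(−i λ₁) • |e₀₀⟩⟨e₀₀| + exp(−i λ₂) • |Φ₁⟩⟨Φ₁| + exp(−i λ₃) • |Φ₂⟩⟨Φ₂| + exp(−i λ₄) • |e₁₁⟩⟨e₁₁|, regarded as a matrix in Matrix (Fin 2 × Fin 2) (Fin 2 × Fin 2) ℂ. Then U is unitary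 (Uᴴ * U = 1) and U commutes with H = σ_z ⊗ₖ I₂ + I₂ ⊗ₖ σ_z. -/
open Kronecker Matrix

/-- The outer product `|v⟩⟨w|` of two vectors, as a matrix. -/
noncomputable def outer (v w : EuclideanSpace ℂ (Fin 2 × Fin 2)) :
    Matrix (Fin 2 × Fin 2) (Fin 2 × Fin 2) ℂ :=
  Matrix.of fun i j => v i * star (w j)

/-- The general energy-conserving two-qubit unitary
`U = e^{−iλ₁}|00⟩⟨00| + e^{−iλ₂}|Φ₁⟩⟨Φ₁| + e^{−iλ₃}|Φ₂⟩⟨Φ₂| + e^{−iλ₄}|11⟩⟨11|`,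
with `Φ₁ = sin λ₅ |10⟩ + cos λ₅ |01⟩` and `Φ₂ = cos λ₅ |10⟩ − sin λ₅ |01⟩`, is
unitary and commutes with `H = σ_z ⊗ I + I ⊗ σ_z`. -/
theorem stmt_15 (l₁ l₂ l₃ l₄ l₅ : ℝ)
    (e₀₀ e₀₁ e₁₀ e₁₁ Φ₁ Φ₂ : EuclideanSpace ℂ (Fin 2 × Fin 2))
    (he₀₀ : e₀₀ = EuclideanSpace.single ((0 : Fin 2), (0 : Fin 2)) 1)
    (he₀₁ : e₀₁ = EuclideanSpace.single ((0 : Fin 2), (1 : Fin 2)) 1)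
    (he₁₀ : e₁₀ = EuclideanSpace.single ((1 : Fin 2), (0 : Fin 2)) 1)
    (he₁₁ : e₁₁ = EuclideanSpace.single ((1 : Fin 2), (1 : Fin 2)) 1)
    (hΦ₁ : Φ₁ = (Real.sin l₅ : ℂ) • e₁₀ + (Real.cos l₅ : ℂ) • e₀₁)
    (hΦ₂ : Φ₂ = (Real.cos l₅ : ℂ) • e₁₀ - (Real.sin l₅ : ℂ) • e₀₁)
    (U : Matrix (Fin 2 × Fin 2) (Fin 2 × Fin 2) ℂ)
    (hU : U = Complex.exp (-(Complex.I * l₁)) • outer e₀₀ e₀₀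
        + Complex.exp (-(Complex.I * l₂)) • outer Φ₁ Φ₁
        + Complex.exp (-(Complex.I * l₃)) • outer Φ₂ Φ₂
        + Complex.exp (-(Complex.I * l₄)) • outer e₁₁ e₁₁) :
    Uᴴ * U = 1 ∧ U * Htot = Htot * U := by
  have hph : ∀ l : ℝ, (starRingEnd ℂ) (Complex.exp (-(Complex.I * l))) * Complex.exp (-(Complex.I * l)) = 1 := by
    intro l
    rw [← Complex.exp_conj, ← Complex.exp_add]
    simp
  have h1 := hph l₁
  have h2 := hph l₂
  have h3 := hph l₃
  have h4 := hph l₄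
  have hs : (starRingEnd ℂ) (Real.sin l₅ : ℂ) = (Real.sin l₅ : ℂ) := Complex.conj_ofReal _
  have hc : (starRingEnd ℂ) (Real.cos l₅ : ℂ) = (Real.cos l₅ : ℂ) := Complex.conj_ofReal _
  have hsc : (Real.sin l₅ : ℂ) ^ 2 + (Real.cos l₅ : ℂ) ^ 2 = 1 := by
    exact_mod_cast Real.sin_sq_add_cos_sq l₅
  generalize Complex.exp (-(Complex.I * l₁)) = a at *
  generalize Complex.exp (-(Complex.I * l₂)) = b at *
  generalize Complex.exp (-(Complex.I * l₃)) = c at *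
  generalize Complex.exp (-(Complex.I * l₄)) = d at *
  generalize (Real.sin l₅ : ℂ) = s at *
  generalize (Real.cos l₅ : ℂ) = t at *
  clear hph
  subst he₀₀ he₀₁ he₁₀ he₁₁ hΦ₁ hΦ₂ hU
  constructor
  · ext ⟨i, j⟩ ⟨k, l⟩
    fin_cases i <;> fin_cases j <;> fin_cases k <;> fin_cases l <;>
      simp [Matrix.mul_apply, Fintype.sum_prod_type, Fin.sum_univ_two, outer, Matrix.one_apply, hs, hc] <;>
      grind
  · ext ⟨i, j⟩ ⟨k, l⟩
    fin_cases i <;> fin_cases j <;> fin_cases k <;> fin_cases l <;>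
      simp [Matrix.mul_apply, Fintype.sum_prod_type, Fin.sum_univ_two, outer, Htot, pauliZ, Matrix.one_apply, hs, hc] <;>
      ring
end

section
/- Let r ∈ ℝ with 0 ≤ r ≤ 1 and a, a', b, c ∈ ℝ. Let Ψ ∈ EuclideanSpace ℂ (Fin 2 × Fin 2) have components Ψ_{(0,0)} = √(1−r), Ψ_{(1,1)} = √r, and Ψ_{(0,1)} = Ψ_{(1,0)} = 0. Let U₁ = !![exp(i a), 0; 0, exp(−i a)] ∈ Matrix (Fin 2) (Fin 2) ℂ, and let U ∈ Matrix (Fin 2 × Fin 2) (Fin 2 × Fin 2) ℂ have entries U_{(0,0),(0,0)} = exp(i a'), U_{(0,1),(1,0)} = exp(i b), U_{(1,0),(0,1)} = exp(i b), U_{(1,1),(1,1)} = exp(i c), and 0 elsewhere. Let M be the matrix of the outer product |Ψ⟩⟨Ψ|. Then the partial trace over the second (environment) factor of U * (U₁ ⊗ₖ I₂) * M * (U₁ᴴ ⊗ₖ I₂) * Uᴴ equals !![(1−r : ℂ), 0; 0, (r : ℂ)]. -/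
open Kronecker Matrix

/-- Under type-I NCPTP encoding with the purification
`|Ψ⟩ = √(1−r)|00⟩ + √r|11⟩`, a diagonal local probe unitary `U₁`, and the
phased-SWAP energy-conserving global unitary `U`, the encoded probe state (the
partial trace over the environment of `U (U₁⊗I) |Ψ⟩⟨Ψ| (U₁ᴴ⊗I) Uᴴ`) is exactly
the thermal state `diag(1−r, r)`. -/
theorem stmt_18 (r : ℝ) (hr0 : 0 ≤ r) (hr1 : r ≤ 1) (a a' b c : ℝ)
    (Ψ : EuclideanSpace ℂ (Fin 2 × Fin 2))
    (hΨ00 : Ψ ((0 : Fin 2), (0 : Fin 2)) = (Real.sqrt (1 - r) : ℂ))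
    (hΨ11 : Ψ ((1 : Fin 2), (1 : Fin 2)) = (Real.sqrt r : ℂ))
    (hΨ01 : Ψ ((0 : Fin 2), (1 : Fin 2)) = 0)
    (hΨ10 : Ψ ((1 : Fin 2), (0 : Fin 2)) = 0)
    (U₁ : Matrix (Fin 2) (Fin 2) ℂ)
    (hU₁ : U₁ = !![Complex.exp (Complex.I * a), 0; 0, Complex.exp (-(Complex.I * a))])
    (U : Matrix (Fin 2 × Fin 2) (Fin 2 × Fin 2) ℂ)
    (hU : ∀ x y : Fin 2 × Fin 2, U x y =
      if x = ((0 : Fin 2), (0 : Fin 2)) ∧ y = ((0 : Fin 2), (0 : Fin 2)) then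
        Complex.exp (Complex.I * a')
      else if x = ((0 : Fin 2), (1 : Fin 2)) ∧ y = ((1 : Fin 2), (0 : Fin 2)) then
        Complex.exp (Complex.I * b)
      else if x = ((1 : Fin 2), (0 : Fin 2)) ∧ y = ((0 : Fin 2), (1 : Fin 2)) then
        Complex.exp (Complex.I * b)
      else if x = ((1 : Fin 2), (1 : Fin 2)) ∧ y = ((1 : Fin 2), (1 : Fin 2)) then
        Complex.exp (Complex.I * c)
      else 0)
    (M : Matrix (Fin 2 × Fin 2) (Fin 2 × Fin 2) ℂ)
    (hM : ∀ α β : Fin 2 × Fin 2, M α β = Ψ α * star (Ψ β)) :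
    ∀ s t : Fin 2,
      ∑ k, (U * (U₁ ⊗ₖ (1 : Matrix (Fin 2) (Fin 2) ℂ)) * M *
          (U₁ᴴ ⊗ₖ (1 : Matrix (Fin 2) (Fin 2) ℂ)) * Uᴴ) (s, k) (t, k) =
        !![(1 - r : ℂ), 0; 0, (r : ℂ)] s t := by
  have h1 : ((Real.sqrt (1 - r) : ℝ) : ℂ) * ((Real.sqrt (1 - r) : ℝ) : ℂ) = 1 - r := by
    rw [← Complex.ofReal_mul, Real.mul_self_sqrt (by linarith)]; push_cast; rfl
  have h2 : ((Real.sqrt r : ℝ) : ℂ) * ((Real.sqrt r : ℝ) : ℂ) = r := by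
    rw [← Complex.ofReal_mul, Real.mul_self_sqrt hr0]
  have he : ∀ x : ℝ, Complex.exp (Complex.I * x) * Complex.exp (-(Complex.I * x)) = 1 := by
    intro x; rw [← Complex.exp_add]; simp
  have ha := he a
  have ha' := he a'
  have hc := he c
  intro s t
  subst hU₁
  fin_cases s <;> fin_cases t <;>
    simp [Matrix.mul_apply, Fintype.sum_prod_type, Fin.sum_univ_two, hU, hM, hΨ00, hΨ11, hΨ01,
      hΨ10, Matrix.kroneckerMap_apply, Matrix.conjTranspose_apply, ← Complex.exp_conj]
  · generalize Complex.exp (Complex.I * a) = x at *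
    generalize Complex.exp (-(Complex.I * a)) = x' at *
    generalize Complex.exp (Complex.I * a') = y at *
    generalize Complex.exp (-(Complex.I * a')) = y' at *
    linear_combination x * x' * y * y' * h1 + (1 - r : ℂ) * y * y' * ha + (1 - r : ℂ) * ha'
  · generalize Complex.exp (Complex.I * a) = x at *
    generalize Complex.exp (-(Complex.I * a)) = x' at *
    generalize Complex.exp (Complex.I * c) = y at *
    generalize Complex.exp (-(Complex.I * c)) = y' at *
    linear_combination x * x' * y * y' * h2 + (r : ℂ) * y * y' * ha + (r : ℂ) * hc
end
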